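/- arXiv:q-alg/9709008 — 2 statements merged into one kernel-verified Lean document; each statement's English description precedes it below -/
import Mathlib

section
/- Let M be a finitely generated module over ℂ[∂] that is a module over a conformal algebra R with no non-zero invariants (no v ≠ 0 with a_{(n)}^M v = 0 for all a ∈ R, n ∈ ℤ₊). Then M is torsion-free, hence a free ℂ[∂]-module. -/
open Finset

/-- A conformal algebra over ℂ: a ℂ[∂]-module (a ℂ-module together with the action `D` of ∂)
with ℂ-bilinear `n`-th products `mul n` for `n ∈ ℤ₊`, satisfying axioms (C0)-(C3).
Here, by convention, `mul (n-1)` for `n = 0` occurs only with coefficient `n = 0`. -/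
structure ConformalAlgebra (R : Type*) [AddCommGroup R] [Module ℂ R] where
  /-- the action of `∂` -/
  D : R →ₗ[ℂ] R
  /-- the `n`-th products `a_{(n)} b` -/
  mul : ℕ → R →ₗ[ℂ] R →ₗ[ℂ] R
  /-- (C0) `a_{(n)} b = 0` for `n ≫ 0` -/
  c0 : ∀ a b : R, ∃ N : ℕ, ∀ n ≥ N, mul n a b = 0
  /-- (C1) `(∂a)_{(n)} b = -n a_{(n-1)} b` -/
  c1 : ∀ (n : ℕ) (a b : R), mul n (D a) b = -(n : ℂ) • mul (n - 1) a b
  /-- (C2) `a_{(n)} b = ∑_{j≥0} (-1)^{j+n+1} (∂^j / j!) (b_{(n+j)} a)` (a finite sum by (C0)) -/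
  c2 : ∀ (n : ℕ) (a b : R) (N : ℕ), (∀ j ≥ N, mul (n + j) b a = 0) →
    mul n a b = ∑ j ∈ range N,
      ((-1 : ℂ) ^ (j + n + 1) * ((j.factorial : ℂ))⁻¹) • (⇑D)^[j] (mul (n + j) b a)
  /-- (C3) the conformal Jacobi identity -/
  c3 : ∀ (m n : ℕ) (a b c : R),
    mul m a (mul n b c) = (∑ j ∈ range (m + 1), ((m.choose j : ℂ)) •
      mul (m + n - j) (mul j a b) c) + mul n b (mul m a c)

variable {R : Type*} [AddCommGroup R] [Module ℂ R]

/-- A module over a conformal algebra `S` on `R`: a `ℂ[∂]`-module `M` (with `∂` acting by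
`DM`) together with ℂ-bilinear actions `act n`, `n ∈ ℤ₊`, satisfying (M0)-(M2). -/
structure ConformalModule (S : ConformalAlgebra R) (M : Type*)
    [AddCommGroup M] [Module ℂ M] where
  /-- the action of `∂` on `M` -/
  DM : M →ₗ[ℂ] M
  /-- the `n`-th actions `a_{(n)}^M` -/
  act : ℕ → R →ₗ[ℂ] M →ₗ[ℂ] M
  /-- (M0) `a_{(n)}^M v = 0` for `n ≫ 0` -/
  m0 : ∀ (a : R) (v : M), ∃ N : ℕ, ∀ n ≥ N, act n a v = 0
  /-- (M1) `[a_{(m)}^M, b_{(n)}^M] = ∑_j C(m,j) (a_{(j)}b)_{(m+n-j)}^M` -/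
  m1 : ∀ (m n : ℕ) (a b : R) (v : M),
    act m a (act n b v) - act n b (act m a v)
      = ∑ j ∈ range (m + 1), ((m.choose j : ℂ)) • act (m + n - j) (S.mul j a b) v
  /-- (M2) `(∂a)_{(n)}^M = -n a_{(n-1)}^M` -/
  m2a : ∀ (n : ℕ) (a : R) (v : M), act n (S.D a) v = -(n : ℂ) • act (n - 1) a v
  /-- (M2) `[∂, a_{(n)}^M] = -n a_{(n-1)}^M` -/
  m2b : ∀ (n : ℕ) (a : R) (v : M),
    DM (act n a v) - act n a (DM v) = -(n : ℂ) • act (n - 1) a v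

/-- An eigenvector of `∂` in a conformal module is an invariant. -/
theorem ConformalModule.act_eq_zero_of_DM_eq_smul {M : Type*} [AddCommGroup M] [Module ℂ M]
    {S : ConformalAlgebra R} (CM : ConformalModule S M) {μ : ℂ} {v : M}
    (hv : CM.DM v = μ • v) (n : ℕ) (a : R) : CM.act n a v = 0 := by
  have step : ∀ k, CM.act (k + 1) a v = 0 → CM.act k a v = 0 := by
    intro k hk
    have h := CM.m2b (k + 1) a v
    rw [hv, map_smul, hk, map_zero, smul_zero, sub_zero, Nat.add_sub_cancel] at h
    exact (smul_eq_zero.mp h.symm).resolve_left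
      (neg_ne_zero.mpr (Nat.cast_ne_zero.mpr k.succ_ne_zero))
  obtain ⟨N, hN⟩ := CM.m0 a v
  exact Nat.decreasingInduction (motive := fun k _ => CM.act k a v = 0)
    (fun k _ hk => step k hk) (hN _ (le_max_left N n)) (le_max_right N n)

/-- Over an algebraically closed field, nonzero polynomials in an endomorphism without
eigenvectors are injective. -/
theorem Module.End.eq_zero_of_aeval_apply_eq_zero {K V : Type*} [Field K] [IsAlgClosed K]
    [AddCommGroup V] [Module K V] {f : Module.End K V}
    (hf : ∀ (μ : K) (v : V), f v = μ • v → v = 0)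
    {p : Polynomial K} (hp : p ≠ 0) {v : V} (hv : Polynomial.aeval f p v = 0) : v = 0 := by
  have key : ∀ s : Multiset K,
      Polynomial.aeval f (s.map fun a => Polynomial.X - Polynomial.C a).prod v = 0 → v = 0 := by
    intro s
    induction s using Multiset.induction with
    | empty => simp
    | cons a s ih =>
      intro h
      apply ih
      apply hf a
      simpa [sub_eq_zero] using h
  apply key p.roots
  rw [(IsAlgClosed.splits p).eq_prod_roots] at hv
  simpa [hp] using hv

/-- The `K[X]`-span of a set in the module given by `f` is the `K`-span of its iterates under `f`. -/
theorem Module.AEval'.mem_span_image_iff {K V : Type*} [CommRing K] [AddCommGroup V] [Module K V]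
    (f : Module.End K V) (s : Set V) (v : V) :
    Module.AEval'.of f v ∈ Submodule.span (Polynomial K) (Module.AEval'.of f '' s) ↔
      v ∈ Submodule.span K {x | ∃ w ∈ s, ∃ k : ℕ, x = (⇑f)^[k] w} := by
  constructor
  · have hD : ∀ p : Polynomial K, ∀ x ∈ s,
        Polynomial.aeval f p x ∈ Submodule.span K {x | ∃ w ∈ s, ∃ k : ℕ, x = (⇑f)^[k] w} := by
      intro p x hx
      rw [Polynomial.aeval_eq_sum_range, LinearMap.sum_apply]
      refine Submodule.sum_mem _ fun k _ => Submodule.smul_mem _ _ (Submodule.subset_span ?_)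
      exact ⟨x, hx, k, Module.End.pow_apply f k x⟩
    intro h
    obtain ⟨t, hts, c, hc⟩ := (Submodule.mem_span_image_iff_exists_fun _).mp h
    have hv : ∑ i, Polynomial.aeval f (c i) i = v := hc
    exact hv ▸ Submodule.sum_mem _ fun i _ => hD (c i) i (hts i.2)
  · intro h
    induction h using Submodule.span_induction with
    | mem x hx =>
      obtain ⟨w, hw, k, rfl⟩ := hx
      rw [← Module.End.pow_apply, ← Module.End.smul_def, ← Module.AEval'.X_pow_smul_of]
      exact Submodule.smul_mem _ _ (Submodule.subset_span ⟨w, hw, rfl⟩)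
    | zero => simp
    | add x y _ _ hx hy => rw [map_add]; exact add_mem hx hy
    | smul c x _ hx =>
      rw [map_smul, ← Module.AEval.C_smul]
      exact Submodule.smul_mem _ _ hx

/-- A finitely generated (over `ℂ[∂]`) module `M` over a conformal algebra with no non-zero
invariants is torsion-free over `ℂ[∂]`, hence a free `ℂ[∂]`-module. -/
theorem finite_module_no_invariants_free {M : Type*} [AddCommGroup M] [Module ℂ M]
    (S : ConformalAlgebra R) (CM : ConformalModule S M)
    (hfg : ∃ s : Finset M, ∀ v : M,
      v ∈ Submodule.span ℂ {x | ∃ w ∈ s, ∃ k : ℕ, x = (⇑CM.DM)^[k] w})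
    (hinv : ∀ v : M, (∀ (n : ℕ) (a : R), CM.act n a v = 0) → v = 0) :
    (∀ p : Polynomial ℂ, p ≠ 0 → ∀ v : M,
        Polynomial.aeval (CM.DM : Module.End ℂ M) p v = 0 → v = 0) ∧
    ∃ (n : ℕ) (bv : Fin n → M),
      (∀ v : M, v ∈ Submodule.span ℂ {x | ∃ (i : Fin n) (k : ℕ), x = (⇑CM.DM)^[k] (bv i)}) ∧
      ∀ c : Fin n → Polynomial ℂ,
        (∑ i, Polynomial.aeval (CM.DM : Module.End ℂ M) (c i) (bv i)) = 0 → ∀ i, c i = 0 := by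
  have htf : ∀ p : Polynomial ℂ, p ≠ 0 → ∀ v : M,
      Polynomial.aeval (CM.DM : Module.End ℂ M) p v = 0 → v = 0 := fun p hp v hv =>
    Module.End.eq_zero_of_aeval_apply_eq_zero
      (fun μ w hw => hinv w fun n a => CM.act_eq_zero_of_DM_eq_smul hw n a) hp hv
  refine ⟨htf, ?_⟩
  let e := Module.AEval'.of (CM.DM : Module.End ℂ M)
  have : Module.IsTorsionFree (Polynomial ℂ) (Module.AEval' (CM.DM : Module.End ℂ M)) := by
    refine Module.IsTorsionFree.of_smul_eq_zero fun p m h => ?_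
    exact or_iff_not_imp_left.mpr fun hp => htf p hp (e.symm m) h
  have : Module.Finite (Polynomial ℂ) (Module.AEval' (CM.DM : Module.End ℂ M)) := by
    obtain ⟨s, hs⟩ := hfg
    refine ⟨Submodule.fg_def.mpr ⟨e '' s, s.finite_toSet.image e, ?_⟩⟩
    refine Submodule.eq_top_iff'.mpr fun m => ?_
    exact (Module.AEval'.mem_span_image_iff CM.DM s (e.symm m)).mpr (hs _)
  obtain ⟨n, b⟩ : Σ n : ℕ, Module.Basis (Fin n) (Polynomial ℂ) (Module.AEval' CM.DM) :=
    Module.basisOfFiniteTypeTorsionFree'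
  refine ⟨n, fun i => e.symm (b i), fun v => ?_, fun c hc => ?_⟩
  · have hb : e v ∈ Submodule.span (Polynomial ℂ)
        (e '' Set.range fun i => e.symm (b i)) := by
      rw [← Set.range_comp]
      exact b.mem_span (e v)
    have h := (Module.AEval'.mem_span_image_iff CM.DM _ v).mp hb
    simpa only [Set.exists_range_iff] using h
  · have hb : LinearIndependent (Polynomial ℂ) b := b.linearIndependent
    exact Fintype.linearIndependent_iff.mp hb c hc
end

section
/- For a simple finite-dimensional Lie algebra g with Killing form (·|·), the sequence of bilinear forms on the current conformal algebra R(g̃) determined by αₙ(a,b) = δ_{n,1}(a|b) for a,b ∈ g (and extended to ℂ[∂]⊗g using αₙ(∂a,b) = -n α_{n-1}(a,b) and ∂-skew-derivation properties) is a 2-cocycle, and it is not of the form αₙ(a,b) = f(a_{(n)}b) for any ℂ-linear f : R(g̃) → ℂ (i.e. it is a non-trivial cocycle). -/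
open Finset

/- The current conformal algebra `R(g̃) = ℂ[∂] ⊗ g` is realized as `ℕ →₀ g`, with `∂` acting
as the index shift and `g` embedded via `Finsupp.single 0`. -/

variable {g : Type*} [LieRing g] [LieAlgebra ℂ g]

/-- The action of `∂` on `ℂ[∂] ⊗ g ≅ ℕ →₀ g`. -/
noncomputable def curD (g : Type*) [LieRing g] [LieAlgebra ℂ g] :
    (ℕ →₀ g) →ₗ[ℂ] (ℕ →₀ g) := Finsupp.lmapDomain g ℂ (· + 1)

/-- The current conformal algebra structure: `∂` acts by the shift, `a_{(0)}b = [a,b]` and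
`a_{(j)}b = 0` for `j > 0`, for `a, b ∈ g`. -/
def IsCurrent (S : ConformalAlgebra (ℕ →₀ g)) : Prop :=
  S.D = curD g ∧
  (∀ a b : g, S.mul 0 (Finsupp.single 0 a) (Finsupp.single 0 b) = Finsupp.single 0 ⁅a, b⁆) ∧
  ∀ j > 0, ∀ a b : g, S.mul j (Finsupp.single 0 a) (Finsupp.single 0 b) = 0

/-- A 2-cocycle on a conformal algebra (with the vanishing required by (C0)). -/
def IsCocycle {R : Type*} [AddCommGroup R] [Module ℂ R] (S : ConformalAlgebra R)
    (al : ℕ → R →ₗ[ℂ] R →ₗ[ℂ] ℂ) : Prop :=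
  (∀ a b : R, ∃ N : ℕ, ∀ n ≥ N, al n a b = 0) ∧
  (∀ (n : ℕ) (a b : R), al n (S.D a) b = -(n : ℂ) * al (n - 1) a b) ∧
  (∀ (n : ℕ) (a b : R), al n a b = (-1 : ℂ) ^ (n + 1) * al n b a) ∧
  (∀ (m n : ℕ) (a b c : R),
    al m a (S.mul n b c) = (∑ j ∈ range (m + 1), (m.choose j : ℂ) *
      al (m + n - j) (S.mul j a b) c) + al n b (S.mul m a c))

@[simp]
lemma curD_single (k : ℕ) (a : g) :
    curD g (Finsupp.single k a) = Finsupp.single (k + 1) a := by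
  simp [curD]

/-- `ℂ[∂] ⊗ g` is generated by `g` as a `ℂ[∂]`-module. -/
lemma curD_induction {P : (ℕ →₀ g) → Prop} (zero : P 0)
    (add : ∀ x y, P x → P y → P (x + y)) (single : ∀ a, P (Finsupp.single 0 a))
    (shift : ∀ x, P x → P (curD g x)) (x : ℕ →₀ g) : P x := by
  induction x using Finsupp.induction_linear with
  | zero => exact zero
  | add x y hx hy => exact add x y hx hy
  | single k a =>
    induction k with
    | zero => exact single a
    | succ k ih => simpa using shift _ ih

/-- `∂` is a skew derivation of the `n`-th products in the second argument. -/
lemma ConformalAlgebra.mul_D_right {R : Type*} [AddCommGroup R] [Module ℂ R]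
    (S : ConformalAlgebra R) (n : ℕ) (a b : R) :
    S.mul n a (S.D b) = S.D (S.mul n a b) + (n : ℂ) • S.mul (n - 1) a b := by
  obtain ⟨N, hN⟩ := S.c0 b a
  rw [S.c2 n a (S.D b) (N + 1) (fun j hj => by rw [S.c1, hN _ (by omega), smul_zero]),
    S.c2 n a b N (fun j hj => hN _ (by omega))]
  have split : ∀ j ∈ range (N + 1),
      ((-1 : ℂ) ^ (j + n + 1) * ((j.factorial : ℂ))⁻¹) •
        (⇑S.D)^[j] (S.mul (n + j) (S.D b) a) =
      ((-1 : ℂ) ^ (j + n) * ((j.factorial : ℂ))⁻¹ * j) •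
        (⇑S.D)^[j] (S.mul (n + j - 1) b a) +
      (n : ℂ) • (((-1 : ℂ) ^ (j + n) * ((j.factorial : ℂ))⁻¹) •
        (⇑S.D)^[j] (S.mul (n + j - 1) b a)) := by
    intro j _
    simp only [S.c1, ← Module.End.coe_pow, map_smul, smul_smul, ← add_smul]
    congr 1
    push_cast
    ring
  rw [sum_congr rfl split, sum_add_distrib, ← smul_sum]
  congr 1
  · rw [sum_range_succ']
    simp only [Nat.cast_zero, mul_zero, zero_smul, add_zero, map_sum, map_smul]
    refine sum_congr rfl fun j _ => ?_
    rw [Function.iterate_succ_apply', show n + (j + 1) - 1 = n + j by omega,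
      show j + 1 + n = j + n + 1 by omega, Nat.factorial_succ]
    congr 1
    have : (j.factorial : ℂ) ≠ 0 := by exact_mod_cast j.factorial_ne_zero
    have : (j : ℂ) + 1 ≠ 0 := by exact_mod_cast j.succ_ne_zero
    push_cast
    field_simp
  · rcases n with _ | n
    · simp
    · rw [Nat.add_sub_cancel, S.c2 n a b (N + 1) (fun j hj => hN _ (by omega))]
      congr 1
      refine sum_congr rfl fun j _ => ?_
      rw [show n + 1 + j - 1 = n + j by omega, add_assoc]

/-- The forms `αₙ(∂ⁱ a, ∂ᵏ b) = (-1)ⁱ n! δ_{n,i+k+1} B(a, b)` on `ℂ[∂] ⊗ g`. -/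
noncomputable def currentForm (B : g →ₗ[ℂ] g →ₗ[ℂ] ℂ) (n : ℕ) :
    (ℕ →₀ g) →ₗ[ℂ] (ℕ →₀ g) →ₗ[ℂ] ℂ :=
  Finsupp.lsum ℂ fun i => (Finsupp.lsum ℂ fun k =>
    (if n = i + k + 1 then (-1 : ℂ) ^ i * n.factorial else 0) • B.flip).flip

section currentForm

variable (B : g →ₗ[ℂ] g →ₗ[ℂ] ℂ)

lemma currentForm_single (n i k : ℕ) (a b : g) :
    currentForm B n (Finsupp.single i a) (Finsupp.single k b) =
      (if n = i + k + 1 then (-1 : ℂ) ^ i * n.factorial else 0) * B a b := by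
  split_ifs with h <;> simp [currentForm, h]

lemma currentForm_curD_left (n : ℕ) (x y : ℕ →₀ g) :
    currentForm B n (curD g x) y = -(n : ℂ) * currentForm B (n - 1) x y := by
  induction x using Finsupp.induction_linear with
  | zero => simp
  | add x x' hx hx' => simp only [map_add, LinearMap.add_apply, hx, hx', mul_add]
  | single i a =>
    induction y using Finsupp.induction_linear with
    | zero => simp
    | add y y' hy hy' => simp only [map_add, hy, hy', mul_add]
    | single k b =>
      rw [curD_single, currentForm_single, currentForm_single]
      rcases n with _ | n
      · simp
      · by_cases h : n = i + k + 1
        · rw [if_pos (by omega), if_pos (by omega), Nat.add_sub_cancel, Nat.factorial_succ]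
          push_cast
          ring
        · rw [if_neg (by omega), if_neg (by omega)]
          ring

lemma currentForm_curD_right (n : ℕ) (x y : ℕ →₀ g) :
    currentForm B n x (curD g y) = (n : ℂ) * currentForm B (n - 1) x y := by
  induction x using Finsupp.induction_linear with
  | zero => simp
  | add x x' hx hx' => simp only [map_add, LinearMap.add_apply, hx, hx', mul_add]
  | single i a =>
    induction y using Finsupp.induction_linear with
    | zero => simp
    | add y y' hy hy' => simp only [map_add, hy, hy', mul_add]
    | single k b =>
      rw [curD_single, currentForm_single, currentForm_single]
      rcases n with _ | n
      · simp
      · by_cases h : n = i + k + 1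
        · rw [if_pos (by omega), if_pos (by omega), Nat.add_sub_cancel, Nat.factorial_succ]
          push_cast
          ring
        · rw [if_neg (by omega), if_neg (by omega)]
          ring

lemma currentForm_swap (hB : ∀ a b, B a b = B b a) (n : ℕ) (x y : ℕ →₀ g) :
    currentForm B n x y = (-1 : ℂ) ^ (n + 1) * currentForm B n y x := by
  induction x using Finsupp.induction_linear with
  | zero => simp
  | add x x' hx hx' => simp only [map_add, LinearMap.add_apply, hx, hx', mul_add]
  | single i a =>
    induction y using Finsupp.induction_linear with
    | zero => simp
    | add y y' hy hy' => simp only [map_add, LinearMap.add_apply, hy, hy', mul_add]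
    | single k b =>
      rw [currentForm_single, currentForm_single, hB a b]
      by_cases h : n = i + k + 1
      · rw [if_pos h, if_pos (by omega), h]
        have : ((-1 : ℂ) ^ k) * (-1 : ℂ) ^ k = 1 := by rw [← mul_pow]; simp
        linear_combination (-(-1 : ℂ) ^ i * (i + k + 1).factorial * B b a) * this
      · rw [if_neg h, if_neg (by omega)]
        ring

lemma currentForm_eventually_zero (x y : ℕ →₀ g) :
    ∃ N : ℕ, ∀ n ≥ N, currentForm B n x y = 0 := by
  induction x using Finsupp.induction_linear with
  | zero => simp
  | add x x' hx hx' =>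
    obtain ⟨N, hN⟩ := hx
    obtain ⟨N', hN'⟩ := hx'
    exact ⟨max N N', fun n hn => by
      simp [hN n (le_of_max_le_left hn), hN' n (le_of_max_le_right hn)]⟩
  | single i a =>
    induction y using Finsupp.induction_linear with
    | zero => simp
    | add y y' hy hy' =>
      obtain ⟨N, hN⟩ := hy
      obtain ⟨N', hN'⟩ := hy'
      exact ⟨max N N', fun n hn => by
        simp [hN n (le_of_max_le_left hn), hN' n (le_of_max_le_right hn)]⟩
    | single k b =>
      refine ⟨i + k + 2, fun n hn => ?_⟩
      rw [currentForm_single, if_neg (by omega), zero_mul]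

end currentForm

/-- Absorption identity for binomial sums, with the index shifted. -/
lemma sum_choose_mul_index (m : ℕ) (F : ℕ → ℂ) :
    ∑ j ∈ range (m + 1), (m.choose j : ℂ) * (j * F j) =
      m * ∑ j ∈ range m, ((m - 1).choose j : ℂ) * F (j + 1) := by
  rcases m with _ | m
  · simp
  · rw [sum_range_succ', mul_sum]
    simp only [Nat.cast_zero, zero_mul, mul_zero, add_zero, Nat.add_sub_cancel]
    refine sum_congr rfl fun j _ => ?_
    have : ((m + 1 : ℕ) : ℂ) * (m.choose j) = ((m + 1).choose (j + 1)) * ((j + 1 : ℕ) : ℂ) := by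
      exact_mod_cast Nat.add_one_mul_choose_eq m j
    linear_combination (-F (j + 1)) * this

/-- Absorption identity for binomial sums, complementary form. -/
lemma sum_choose_mul_sub_index (m : ℕ) (F : ℕ → ℂ) :
    ∑ j ∈ range (m + 1), (m.choose j : ℂ) * (((m : ℂ) - j) * F j) =
      m * ∑ j ∈ range m, ((m - 1).choose j : ℂ) * F j := by
  rcases m with _ | m
  · simp
  · rw [sum_range_succ, mul_sum]
    simp only [sub_self, zero_mul, mul_zero, add_zero, Nat.add_sub_cancel]
    refine sum_congr rfl fun j hj => ?_
    have hj : j ≤ m := by simpa [Nat.lt_succ_iff] using hj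
    have := Nat.choose_mul_succ_eq m j
    have : ((m.choose j : ℕ) : ℂ) * ((m + 1 : ℕ) : ℂ) =
        ((m + 1).choose j) * ((m + 1 : ℕ) - j : ℂ) := by
      rw [← Nat.cast_sub (by omega)]
      exact_mod_cast this
    linear_combination (-F j) * this

/-- The conformal Jacobi identity for the forms associated with an invariant form. -/
lemma currentForm_jacobi (B : g →ₗ[ℂ] g →ₗ[ℂ] ℂ)
    (hinv : ∀ a b c, B ⁅a, b⁆ c = B a ⁅b, c⁆)
    (S : ConformalAlgebra (ℕ →₀ g)) (hS : IsCurrent S) (m n : ℕ) (a b c : ℕ →₀ g) :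
    currentForm B m a (S.mul n b c) = (∑ j ∈ range (m + 1), (m.choose j : ℂ) *
      currentForm B (m + n - j) (S.mul j a b) c) + currentForm B n b (S.mul m a c) := by
  obtain ⟨hD, h0, hpos⟩ := hS
  have c1 : ∀ n x y, S.mul n (curD g x) y = -(n : ℂ) • S.mul (n - 1) x y := hD ▸ S.c1
  have c1' : ∀ n x y, S.mul n x (curD g y) =
      curD g (S.mul n x y) + (n : ℂ) • S.mul (n - 1) x y := hD ▸ S.mul_D_right
  induction a using curD_induction generalizing m n with
  | zero => simp
  | add a a' ha ha' =>
    simp only [map_add, LinearMap.add_apply, mul_add, sum_add_distrib, ha m n, ha' m n]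
    ring
  | shift a ih =>
    have e : ∀ j ∈ range (m + 1), (m.choose j : ℂ) *
        currentForm B (m + n - j) (S.mul j (curD g a) b) c =
        (m.choose j : ℂ) * (j * -currentForm B (m + n - j) (S.mul (j - 1) a b) c) := by
      intro j _
      simp [c1]
    rw [sum_congr rfl e, sum_choose_mul_index m
      (fun j => -currentForm B (m + n - j) (S.mul (j - 1) a b) c), currentForm_curD_left, c1]
    rcases m with _ | m
    · simp
    · simp only [Nat.add_sub_cancel, ih m n, map_smul, smul_eq_mul, mul_neg, sum_neg_distrib,
        show ∀ j, m + 1 + n - (j + 1) = m + n - j by omega]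
      ring
  | single a =>
    induction b using curD_induction generalizing m n with
    | zero => simp
    | add b b' hb hb' =>
      simp only [map_add, LinearMap.add_apply, mul_add, sum_add_distrib, hb m n, hb' m n]
      ring
    | shift b ih =>
      set a' : ℕ →₀ g := Finsupp.single 0 a
      have e : ∀ j ∈ range (m + 1), (m.choose j : ℂ) *
          currentForm B (m + n - j) (S.mul j a' (curD g b)) c =
          -((m.choose j : ℂ) *
            (((m : ℂ) - j) * currentForm B (m + n - j - 1) (S.mul j a' b) c)) +
          (m.choose j : ℂ) * (j * currentForm B (m + n - j) (S.mul (j - 1) a' b) c) +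
          -n * ((m.choose j : ℂ) * currentForm B (m + n - j - 1) (S.mul j a' b) c) := by
        intro j hj
        have hj : j ≤ m := by simpa [Nat.lt_succ_iff] using hj
        simp only [c1', currentForm_curD_left, map_add, LinearMap.add_apply, map_smul,
          LinearMap.smul_apply, smul_eq_mul]
        rw [Nat.cast_sub (by omega)]
        push_cast
        ring
      rw [sum_congr rfl e, sum_add_distrib, sum_add_distrib, sum_neg_distrib, ← mul_sum,
        sum_choose_mul_sub_index m (fun j => currentForm B (m + n - j - 1) (S.mul j a' b) c),
        sum_choose_mul_index m (fun j => currentForm B (m + n - j) (S.mul (j - 1) a' b) c),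
        currentForm_curD_left, c1]
      simp only [show ∀ j, m + n - (j + 1) = m + n - j - 1 by omega, Nat.add_sub_cancel]
      rcases n with _ | n
      · simp
      · simp only [Nat.add_sub_cancel, map_smul, smul_eq_mul, ih m n,
          show ∀ j, m + (n + 1) - j - 1 = m + n - j by omega]
        ring
    | single b =>
      induction c using curD_induction generalizing m n with
      | zero => simp
      | add c c' hc hc' =>
        simp only [map_add, mul_add, sum_add_distrib, hc m n, hc' m n]
        ring
      | shift c ih =>
        set a' : ℕ →₀ g := Finsupp.single 0 a
        set b' : ℕ →₀ g := Finsupp.single 0 b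
        have e : ∀ j ∈ range (m + 1), (m.choose j : ℂ) *
            currentForm B (m + n - j) (S.mul j a' b') (curD g c) =
            (m.choose j : ℂ) *
              (((m : ℂ) - j) * currentForm B (m + n - j - 1) (S.mul j a' b') c) +
            n * ((m.choose j : ℂ) * currentForm B (m + n - j - 1) (S.mul j a' b') c) := by
          intro j hj
          have hj : j ≤ m := by simpa [Nat.lt_succ_iff] using hj
          rw [currentForm_curD_right, Nat.cast_sub (by omega)]
          push_cast
          ring
        rw [sum_congr rfl e, sum_add_distrib, ← mul_sum,
          sum_choose_mul_sub_index m (fun j => currentForm B (m + n - j - 1) (S.mul j a' b') c)]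
        simp only [c1', currentForm_curD_right, map_add, map_smul, smul_eq_mul]
        have h1 : (m : ℂ) * currentForm B (m - 1) a' (S.mul n b' c) =
            m * ((∑ j ∈ range m, ((m - 1).choose j : ℂ) *
              currentForm B (m + n - j - 1) (S.mul j a' b') c) +
              currentForm B n b' (S.mul (m - 1) a' c)) := by
          rcases m with _ | m
          · simp
          · simp only [Nat.add_sub_cancel, ih m n,
              show ∀ j, m + 1 + n - j - 1 = m + n - j by omega]
        have h2 : (n : ℂ) * currentForm B m a' (S.mul (n - 1) b' c) =
            n * ((∑ j ∈ range (m + 1), (m.choose j : ℂ) *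
              currentForm B (m + n - j - 1) (S.mul j a' b') c) +
              currentForm B (n - 1) b' (S.mul m a' c)) := by
          rcases n with _ | n
          · simp
          · simp only [Nat.add_sub_cancel, ih m n,
              show ∀ j, m + (n + 1) - j - 1 = m + n - j by omega]
        linear_combination h1 + h2
      | single c =>
        have hmul : ∀ k (x y : g), S.mul k (Finsupp.single 0 x) (Finsupp.single 0 y) =
            if k = 0 then Finsupp.single 0 ⁅x, y⁆ else 0 := by
          intro k x y
          split_ifs with hk
          · rw [hk, h0]
          · exact hpos k (by omega) x y
        have hform : ∀ k (x y : g),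
            currentForm B k (Finsupp.single 0 x) (Finsupp.single 0 y) =
              if k = 1 then B x y else 0 := by
          intro k x y
          rw [currentForm_single]
          split_ifs <;> simp_all
        rw [sum_range_succ', sum_eq_zero (fun j _ => by simp [hpos (j + 1) (by omega)])]
        simp only [hmul, Nat.sub_zero, Nat.choose_zero_right, if_true, Nat.cast_one, one_mul,
          zero_add, hform, apply_ite (currentForm B _ _), map_zero, hinv]
        have : B b ⁅a, c⁆ = -B a ⁅b, c⁆ := by
          rw [← hinv, ← lie_skew, map_neg, LinearMap.neg_apply, hinv]
        rcases m with _ | _ | m <;> rcases n with _ | _ | n <;> simp [this] <;> omega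

/-- For a simple finite-dimensional Lie algebra `g` with Killing form `(·|·)`, the sequence
of bilinear forms on `R(g̃)` determined by `αₙ(a,b) = δ_{n,1} (a|b)` for `a, b ∈ g` is a
2-cocycle, and it is not of the form `αₙ(a,b) = f(a_{(n)}b)` for any ℂ-linear
`f : R(g̃) → ℂ`, i.e. it is a non-trivial cocycle. -/
theorem killing_cocycle_nontrivial [LieAlgebra.IsSimple ℂ g] [FiniteDimensional ℂ g]
    (S : ConformalAlgebra (ℕ →₀ g)) (hS : IsCurrent S) :
    ∃ al : ℕ → (ℕ →₀ g) →ₗ[ℂ] (ℕ →₀ g) →ₗ[ℂ] ℂ,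
      IsCocycle S al ∧
      (∀ a b : g, al 1 (Finsupp.single 0 a) (Finsupp.single 0 b) = killingForm ℂ g a b) ∧
      (∀ n : ℕ, n ≠ 1 → ∀ a b : g,
        al n (Finsupp.single 0 a) (Finsupp.single 0 b) = 0) ∧
      ¬∃ f : (ℕ →₀ g) →ₗ[ℂ] ℂ, ∀ (n : ℕ) (x y : ℕ →₀ g), al n x y = f (S.mul n x y) := by
  refine ⟨currentForm (killingForm ℂ g),
    ⟨currentForm_eventually_zero _, hS.1 ▸ currentForm_curD_left _,
      currentForm_swap _ (LieModule.traceForm_comm ℂ g g),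
      currentForm_jacobi _ (LieModule.traceForm_apply_lie_apply ℂ g g) S hS⟩,
    fun a b => by simp [currentForm_single], fun n hn a b => by simp [currentForm_single, hn], ?_⟩
  rintro ⟨f, hf⟩
  have hzero : killingForm ℂ g = 0 := by
    ext a b
    have := hf 1 (Finsupp.single 0 a) (Finsupp.single 0 b)
    simpa [currentForm_single, hS.2.2 1 one_pos] using this
  have := LieAlgebra.IsSimple.nontrivial ℂ g
  obtain ⟨a, ha⟩ := exists_ne (0 : g)
  exact ha ((LieAlgebra.IsKilling.killingForm_nondegenerate ℂ g).1 a (by simp [hzero]))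
end
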